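/- arXiv:2103.01549 — 3 statements merged into one kernel-verified Lean document; each statement's English description precedes it below -/
import Mathlib

section
/- The function φ(x₁, x₂, x₃, x₄, s) = 1/((x₁² + x₂² + x₃² + x₄²)² + s²) satisfies the sub-Laplacian equation Δ_bφ := X₁²φ + X₂²φ + X₃²φ + X₄²φ = 0 on ℝ⁵ ∖ {0} (i.e. wherever (x₁² + x₂² + x₃² + x₄²)² + s² ≠ 0). -/
/-- Real partial derivative in the `i`-th coordinate direction on `ℝ⁵`. -/
noncomputable def pdR (i : Fin 5) (f : (Fin 5 → ℝ) → ℝ) (x : Fin 5 → ℝ) : ℝ :=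
  fderiv ℝ f x (Pi.single i 1)

/-- Coordinates on `ℝ⁵` are `(x₁, x₂, x₃, x₄, s)`, indexed by `0,…,4`. -/
noncomputable def X1 (f : (Fin 5 → ℝ) → ℝ) (x : Fin 5 → ℝ) : ℝ :=
  (1 / 2) * pdR 0 f x + x 1 * pdR 4 f x
noncomputable def X2 (f : (Fin 5 → ℝ) → ℝ) (x : Fin 5 → ℝ) : ℝ :=
  (1 / 2) * pdR 1 f x - x 0 * pdR 4 f x
noncomputable def X3 (f : (Fin 5 → ℝ) → ℝ) (x : Fin 5 → ℝ) : ℝ :=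
  (1 / 2) * pdR 2 f x + x 3 * pdR 4 f x
noncomputable def X4 (f : (Fin 5 → ℝ) → ℝ) (x : Fin 5 → ℝ) : ℝ :=
  (1 / 2) * pdR 3 f x - x 2 * pdR 4 f x

/-- `φ = 1/(|x|⁴ + s²)` on the real Heisenberg group. -/
noncomputable def phiR (x : Fin 5 → ℝ) : ℝ :=
  1 / ((x 0 ^ 2 + x 1 ^ 2 + x 2 ^ 2 + x 3 ^ 2) ^ 2 + (x 4) ^ 2)

/-! Let `N = |x|⁴ + s²` on `ℝⁿ × ℝ`, let `J` be a skew orthogonal `n × n` matrix, and let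
`Vᵢ = ½ ∂/∂xᵢ + (J x)ᵢ ∂/∂s`. Since `J x` is orthogonal to `x` and as long as `x`, one finds
`∑ (Vᵢ N)² = 4 |x|² N` and `∑ Vᵢ² N = (n + 4) |x|²`. By the chain rule
`∑ Vᵢ² (N ^ α) = α (n + 4 α) |x|² N ^ (α - 1)`, which vanishes for `α = -n / 4`; the function `φ`
is the case `n = 4`. -/

section LieDeriv

variable {𝕜 : Type*} [NontriviallyNormedField 𝕜] {E : Type*} [NormedAddCommGroup E]
  [NormedSpace 𝕜 E] {f g : E → 𝕜} {x : E}

/-- The derivative `V f` of a scalar function along a vector field, the field being read as a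
first-order differential operator. -/
noncomputable def lieDeriv (V : E → E) (f : E → 𝕜) (x : E) : 𝕜 :=
  fderiv 𝕜 f x (V x)

lemma lieDeriv_proj {κ : Type*} [Fintype κ] (V : (κ → 𝕜) → κ → 𝕜) (k : κ) (x : κ → 𝕜) :
    lieDeriv V (fun y => y k) x = V x k := by
  simp [lieDeriv, fderiv_apply]

lemma lieDeriv_add (V : E → E) (hf : DifferentiableAt 𝕜 f x) (hg : DifferentiableAt 𝕜 g x) :
    lieDeriv V (fun y => f y + g y) x = lieDeriv V f x + lieDeriv V g x := by
  simp [lieDeriv, fderiv_fun_add hf hg]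

lemma lieDeriv_sum {κ : Type*} {s : Finset κ} {F : κ → E → 𝕜} (V : E → E)
    (hF : ∀ k ∈ s, DifferentiableAt 𝕜 (F k) x) :
    lieDeriv V (fun y => ∑ k ∈ s, F k y) x = ∑ k ∈ s, lieDeriv V (F k) x := by
  simp [lieDeriv, fderiv_fun_sum hF]

lemma lieDeriv_const_mul (V : E → E) (c : 𝕜) (hf : DifferentiableAt 𝕜 f x) :
    lieDeriv V (fun y => c * f y) x = c * lieDeriv V f x := by
  simp [lieDeriv, fderiv_const_mul hf]

lemma lieDeriv_mul (V : E → E) (hf : DifferentiableAt 𝕜 f x) (hg : DifferentiableAt 𝕜 g x) :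
    lieDeriv V (fun y => f y * g y) x = f x * lieDeriv V g x + g x * lieDeriv V f x := by
  simp [lieDeriv, fderiv_fun_mul hf hg]

lemma lieDeriv_sq (V : E → E) (hf : DifferentiableAt 𝕜 f x) :
    lieDeriv V (fun y => f y ^ 2) x = 2 * f x * lieDeriv V f x := by
  simp only [sq, lieDeriv_mul V hf hf]
  ring

/-- Hörmander's sum of squares `∑ᵢ Vᵢ²` of a finite family of vector fields; for the fields
spanning the horizontal distribution of a Heisenberg group it is the sub-Laplacian. -/
noncomputable def sumOfSquares {ι : Type*} [Fintype ι] (V : ι → E → E) (f : E → 𝕜) (x : E) : 𝕜 :=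
  ∑ i, lieDeriv (V i) (lieDeriv (V i) f) x

end LieDeriv

section RealPower

open scoped Topology

variable {E : Type*} [NormedAddCommGroup E] [NormedSpace ℝ E] {f : E → ℝ} {x : E}

lemma lieDeriv_rpow (V : E → E) (α : ℝ) (hf : DifferentiableAt ℝ f x) (hx : f x ≠ 0) :
    lieDeriv V (fun y => f y ^ α) x = α * f x ^ (α - 1) * lieDeriv V f x := by
  simp [lieDeriv, (hf.hasFDerivAt.rpow_const (.inl hx)).fderiv]

lemma lieDeriv_lieDeriv_rpow (V : E → E) (α : ℝ) (hf : ∀ᶠ y in 𝓝 x, DifferentiableAt ℝ f y)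
    (hVf : DifferentiableAt ℝ (lieDeriv V f) x) (hx : f x ≠ 0) :
    lieDeriv V (lieDeriv V fun y => f y ^ α) x =
      α * f x ^ (α - 2) *
        (f x * lieDeriv V (lieDeriv V f) x + (α - 1) * lieDeriv V f x ^ 2) := by
  have hfx : DifferentiableAt ℝ f x := hf.self_of_nhds
  have hpow : DifferentiableAt ℝ (fun y => f y ^ (α - 1)) x := hfx.rpow_const (.inl hx)
  have first_deriv : lieDeriv V (fun y => f y ^ α) =ᶠ[𝓝 x]
      fun y => α * (f y ^ (α - 1) * lieDeriv V f y) := by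
    filter_upwards [hf, hfx.continuousAt.eventually_ne hx] with y hy hy0
    rw [lieDeriv_rpow V α hy hy0, mul_assoc]
  have rpow_pred : f x ^ (α - 1) = f x ^ (α - 2) * f x := by
    rw [← Real.rpow_add_one hx]
    ring_nf
  calc lieDeriv V (lieDeriv V fun y => f y ^ α) x
      = lieDeriv V (fun y => α * (f y ^ (α - 1) * lieDeriv V f y)) x := by
        rw [lieDeriv, first_deriv.fderiv_eq, ← lieDeriv]
    _ = α * (f x ^ (α - 1) * lieDeriv V (lieDeriv V f) x +
          lieDeriv V f x * ((α - 1) * f x ^ (α - 1 - 1) * lieDeriv V f x)) := by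
        rw [lieDeriv_const_mul V α (hpow.fun_mul hVf), lieDeriv_mul V hpow hVf,
          lieDeriv_rpow V _ hfx hx]
    _ = _ := by
        rw [rpow_pred, show α - 1 - 1 = α - 2 by ring]
        ring

lemma sumOfSquares_rpow {ι : Type*} [Fintype ι] (V : ι → E → E) (α : ℝ)
    (hf : ∀ᶠ y in 𝓝 x, DifferentiableAt ℝ f y)
    (hVf : ∀ i, DifferentiableAt ℝ (lieDeriv (V i) f) x) (hx : f x ≠ 0) :
    sumOfSquares V (fun y => f y ^ α) x =
      α * f x ^ (α - 2) *
        (f x * sumOfSquares V f x + (α - 1) * ∑ i, lieDeriv (V i) f x ^ 2) := by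
  simp only [sumOfSquares, lieDeriv_lieDeriv_rpow _ α hf (hVf _) hx, Finset.mul_sum,
    ← Finset.sum_add_distrib]

end RealPower

section Matrix

open Matrix

variable {m k R : Type*}

lemma diag_eq_zero_of_transpose_eq_neg [AddGroup R] [IsAddTorsionFree R] {A : Matrix m m R}
    (hA : Aᵀ = -A) (i : m) : A i i = 0 :=
  self_eq_neg.mp (congrFun₂ hA i i)

lemma dotProduct_mulVec_self_of_transpose_eq_neg [Fintype m] [CommRing R] [IsAddTorsionFree R]
    {A : Matrix m m R} (hA : Aᵀ = -A) (v : m → R) : v ⬝ᵥ A *ᵥ v = 0 := by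
  have eq_neg : v ⬝ᵥ A *ᵥ v = -(v ⬝ᵥ A *ᵥ v) := calc
    v ⬝ᵥ A *ᵥ v = Aᵀ *ᵥ v ⬝ᵥ v := by rw [dotProduct_mulVec, mulVec_transpose]
    _ = -(v ⬝ᵥ A *ᵥ v) := by rw [hA, neg_mulVec, neg_dotProduct, dotProduct_comm]
  exact self_eq_neg.mp eq_neg

lemma mulVec_dotProduct_mulVec_of_transpose_mul_self [Fintype m] [Fintype k] [DecidableEq k]
    [CommSemiring R] {A : Matrix m k R} (hA : Aᵀ * A = 1) (v w : k → R) :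
    A *ᵥ v ⬝ᵥ A *ᵥ w = v ⬝ᵥ w := by
  rw [dotProduct_mulVec, ← mulVec_transpose, mulVec_mulVec, hA, one_mulVec]

end Matrix

section Heisenberg

open Matrix

variable {n : ℕ}

/-- The square `|x|²` of the Euclidean norm of the horizontal part of `(x, s)`. -/
def horizontalNormSq (x : Fin (n + 1) → ℝ) : ℝ :=
  ∑ i : Fin n, x i.castSucc ^ 2

/-- The fourth power `|x|⁴ + s²` of the Korányi gauge of `(x, s)`. -/
def koranyiQuartic (x : Fin (n + 1) → ℝ) : ℝ :=
  horizontalNormSq x ^ 2 + x (Fin.last n) ^ 2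

/-- The coefficient `(J x)ᵢ` of `∂/∂s` in the `i`-th horizontal field at `(x, s)`. -/
def verticalCoeff (J : Matrix (Fin n) (Fin n) ℝ) (i : Fin n) (x : Fin (n + 1) → ℝ) : ℝ :=
  ∑ j, J i j * x j.castSucc

/-- The field `½ ∂/∂xᵢ + (J x)ᵢ ∂/∂s` on `ℝⁿ⁺¹`, whose coordinates are `(x, s)` with `s` last.
For `J` skew and orthogonal these are the horizontal fields of a Heisenberg group. -/
noncomputable def horizontalField (J : Matrix (Fin n) (Fin n) ℝ) (i : Fin n)
    (x : Fin (n + 1) → ℝ) : Fin (n + 1) → ℝ :=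
  (1 / 2 : ℝ) • Pi.single i.castSucc 1 + verticalCoeff J i x • Pi.single (Fin.last n) 1

variable (J : Matrix (Fin n) (Fin n) ℝ) (i : Fin n) (x : Fin (n + 1) → ℝ)

@[fun_prop]
lemma differentiable_horizontalNormSq : Differentiable ℝ (horizontalNormSq (n := n)) := by
  unfold horizontalNormSq
  fun_prop

@[fun_prop]
lemma differentiable_koranyiQuartic : Differentiable ℝ (koranyiQuartic (n := n)) := by
  unfold koranyiQuartic
  fun_prop

@[fun_prop]
lemma differentiable_verticalCoeff : Differentiable ℝ (verticalCoeff J i) := by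
  unfold verticalCoeff
  fun_prop

lemma lieDeriv_horizontalField_castSucc (j : Fin n) :
    lieDeriv (horizontalField J i) (fun y => y j.castSucc) x = if i = j then 1 / 2 else 0 := by
  simp [lieDeriv_proj, horizontalField, Pi.single_apply, eq_comm]

lemma lieDeriv_horizontalField_last :
    lieDeriv (horizontalField J i) (fun y => y (Fin.last n)) x = verticalCoeff J i x := by
  simp [lieDeriv_proj, horizontalField, (Fin.castSucc_ne_last i).symm]

lemma lieDeriv_horizontalField_horizontalNormSq :
    lieDeriv (horizontalField J i) horizontalNormSq x = x i.castSucc := by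
  unfold horizontalNormSq
  rw [lieDeriv_sum _ fun j _ => by fun_prop]
  simp (disch := fun_prop) only [lieDeriv_sq, lieDeriv_horizontalField_castSucc, mul_ite, mul_zero,
    Finset.sum_ite_eq, Finset.mem_univ, if_true]
  ring

lemma lieDeriv_horizontalField_verticalCoeff :
    lieDeriv (horizontalField J i) (verticalCoeff J i) x = J i i / 2 := by
  unfold verticalCoeff
  rw [lieDeriv_sum _ fun j _ => by fun_prop]
  simp (disch := fun_prop) [lieDeriv_const_mul, lieDeriv_horizontalField_castSucc, div_eq_mul_inv]

lemma lieDeriv_horizontalField_koranyiQuartic :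
    lieDeriv (horizontalField J i) koranyiQuartic x =
      2 * (horizontalNormSq x * x i.castSucc + x (Fin.last n) * verticalCoeff J i x) := by
  unfold koranyiQuartic
  simp (disch := fun_prop) only [lieDeriv_add, lieDeriv_sq,
    lieDeriv_horizontalField_horizontalNormSq, lieDeriv_horizontalField_last]
  ring

@[fun_prop]
lemma differentiable_lieDeriv_koranyiQuartic :
    Differentiable ℝ (lieDeriv (horizontalField J i) koranyiQuartic) := by
  simp only [funext (lieDeriv_horizontalField_koranyiQuartic J i)]
  fun_prop

lemma lieDeriv_lieDeriv_koranyiQuartic :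
    lieDeriv (horizontalField J i) (lieDeriv (horizontalField J i) koranyiQuartic) x =
      horizontalNormSq x + 2 * x i.castSucc ^ 2 + 2 * verticalCoeff J i x ^ 2
        + J i i * x (Fin.last n) := by
  simp (disch := fun_prop) only [funext (lieDeriv_horizontalField_koranyiQuartic J i),
    lieDeriv_const_mul, lieDeriv_add, lieDeriv_mul, lieDeriv_horizontalField_horizontalNormSq,
    lieDeriv_horizontalField_castSucc, lieDeriv_horizontalField_last,
    lieDeriv_horizontalField_verticalCoeff, if_true]
  ring

variable {J}

lemma sum_mul_verticalCoeff (hskew : Jᵀ = -J) :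
    ∑ i : Fin n, x i.castSucc * verticalCoeff J i x = 0 :=
  dotProduct_mulVec_self_of_transpose_eq_neg hskew (Fin.init x)

lemma sum_verticalCoeff_sq (horth : Jᵀ * J = 1) :
    ∑ i, verticalCoeff J i x ^ 2 = horizontalNormSq x := by
  simp only [horizontalNormSq, sq]
  exact mulVec_dotProduct_mulVec_of_transpose_mul_self horth (Fin.init x) (Fin.init x)

lemma sum_lieDeriv_koranyiQuartic_sq (hskew : Jᵀ = -J) (horth : Jᵀ * J = 1) :
    ∑ i, lieDeriv (horizontalField J i) koranyiQuartic x ^ 2 =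
      4 * horizontalNormSq x * koranyiQuartic x := by
  set r := horizontalNormSq x
  set s := x (Fin.last n)
  have sum_sq : ∑ i : Fin n, x i.castSucc ^ 2 = r := rfl
  calc ∑ i, lieDeriv (horizontalField J i) koranyiQuartic x ^ 2
      = ∑ i : Fin n, (4 * r ^ 2 * x i.castSucc ^ 2
          + 8 * r * s * (x i.castSucc * verticalCoeff J i x)
          + 4 * s ^ 2 * verticalCoeff J i x ^ 2) := by
        refine Finset.sum_congr rfl fun i _ => ?_
        rw [lieDeriv_horizontalField_koranyiQuartic]
        ring
    _ = 4 * r ^ 2 * r + 8 * r * s * 0 + 4 * s ^ 2 * r := by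
        simp only [Finset.sum_add_distrib, ← Finset.mul_sum, sum_mul_verticalCoeff x hskew,
          sum_verticalCoeff_sq x horth, sum_sq, r]
    _ = 4 * r * koranyiQuartic x := by
        rw [koranyiQuartic]
        ring

lemma sumOfSquares_koranyiQuartic (hskew : Jᵀ = -J) (horth : Jᵀ * J = 1) :
    sumOfSquares (horizontalField J) koranyiQuartic x = (n + 4) * horizontalNormSq x := by
  calc sumOfSquares (horizontalField J) koranyiQuartic x
      = ∑ i : Fin n,
          (horizontalNormSq x + 2 * x i.castSucc ^ 2 + 2 * verticalCoeff J i x ^ 2) := by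
        simp only [sumOfSquares, lieDeriv_lieDeriv_koranyiQuartic,
          diag_eq_zero_of_transpose_eq_neg hskew, zero_mul, add_zero]
    _ = n * horizontalNormSq x + 2 * horizontalNormSq x + 2 * horizontalNormSq x := by
        simp only [Finset.sum_add_distrib, ← Finset.mul_sum, sum_verticalCoeff_sq x horth,
          Fin.sum_const, nsmul_eq_mul]
        rw [← horizontalNormSq]
    _ = (n + 4) * horizontalNormSq x := by ring

variable {x}

theorem phiR_harmonic_general (hskew : Jᵀ = -J) (horth : Jᵀ * J = 1) (hx : koranyiQuartic x ≠ 0) :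
    sumOfSquares (horizontalField J) (fun y => koranyiQuartic y ^ (-n / 4 : ℝ)) x = 0 := by
  rw [sumOfSquares_rpow _ _ (.of_forall (by fun_prop)) (fun i => by fun_prop) hx,
    sumOfSquares_koranyiQuartic x hskew horth, sum_lieDeriv_koranyiQuartic_sq x hskew horth]
  ring

end Heisenberg

section FiveDimensional

open Matrix

/-- The matrix of `(x₁, x₂, x₃, x₄) ↦ (x₂, -x₁, x₄, -x₃)`, which collects the coefficients of
`∂/∂s` in the fields `X1`, …, `X4`. -/
def heisenbergMatrix : Matrix (Fin 4) (Fin 4) ℝ :=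
  !![0, 1, 0, 0; -1, 0, 0, 0; 0, 0, 0, 1; 0, 0, -1, 0]

lemma heisenbergMatrix_transpose : heisenbergMatrixᵀ = -heisenbergMatrix := by
  ext i j
  fin_cases i <;> fin_cases j <;> simp [heisenbergMatrix]

lemma heisenbergMatrix_transpose_mul_self : heisenbergMatrixᵀ * heisenbergMatrix = 1 := by
  ext i j
  fin_cases i <;> fin_cases j <;> simp [heisenbergMatrix, mul_apply, Fin.sum_univ_four]

lemma lieDeriv_horizontalField_eq_pdR (J : Matrix (Fin 4) (Fin 4) ℝ) (i : Fin 4)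
    (f : (Fin 5 → ℝ) → ℝ) (x : Fin 5 → ℝ) :
    lieDeriv (horizontalField J i) f x =
      1 / 2 * pdR i.castSucc f x + verticalCoeff J i x * pdR 4 f x := by
  rw [lieDeriv, horizontalField, map_add, map_smul, map_smul]
  rfl

lemma X1_eq_lieDeriv : X1 = lieDeriv (horizontalField heisenbergMatrix 0) := by
  ext f x
  simp [lieDeriv_horizontalField_eq_pdR, X1, verticalCoeff, heisenbergMatrix, Fin.sum_univ_four]

lemma X2_eq_lieDeriv : X2 = lieDeriv (horizontalField heisenbergMatrix 1) := by
  ext f x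
  simp [lieDeriv_horizontalField_eq_pdR, X2, verticalCoeff, heisenbergMatrix, Fin.sum_univ_four,
    sub_eq_add_neg]

lemma X3_eq_lieDeriv : X3 = lieDeriv (horizontalField heisenbergMatrix 2) := by
  ext f x
  simp [lieDeriv_horizontalField_eq_pdR, X3, verticalCoeff, heisenbergMatrix, Fin.sum_univ_four]

lemma X4_eq_lieDeriv : X4 = lieDeriv (horizontalField heisenbergMatrix 3) := by
  ext f x
  simp [lieDeriv_horizontalField_eq_pdR, X4, verticalCoeff, heisenbergMatrix, Fin.sum_univ_four,
    sub_eq_add_neg]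

lemma sumOfSquares_heisenbergMatrix (f : (Fin 5 → ℝ) → ℝ) (x : Fin 5 → ℝ) :
    sumOfSquares (horizontalField heisenbergMatrix) f x =
      X1 (X1 f) x + X2 (X2 f) x + X3 (X3 f) x + X4 (X4 f) x := by
  rw [sumOfSquares, Fin.sum_univ_four, X1_eq_lieDeriv, X2_eq_lieDeriv, X3_eq_lieDeriv,
    X4_eq_lieDeriv]

lemma koranyiQuartic_fin_five (x : Fin 5 → ℝ) :
    koranyiQuartic x = (x 0 ^ 2 + x 1 ^ 2 + x 2 ^ 2 + x 3 ^ 2) ^ 2 + x 4 ^ 2 := by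
  rw [koranyiQuartic, horizontalNormSq, Fin.sum_univ_four]
  rfl

lemma phiR_eq_koranyiQuartic_rpow :
    phiR = fun x => koranyiQuartic x ^ (-(4 : ℕ) / 4 : ℝ) := by
  ext x
  rw [phiR, ← koranyiQuartic_fin_five, one_div, Nat.cast_ofNat, neg_div, div_self four_ne_zero,
    Real.rpow_neg_one]

end FiveDimensional

/-- `φ = 1/(|x|⁴ + s²)` solves the sub-Laplacian equation
`Δ_bφ = X₁²φ + X₂²φ + X₃²φ + X₄²φ = 0` wherever `|x|⁴ + s² ≠ 0`. -/
theorem phiR_harmonic (x : Fin 5 → ℝ)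
    (h : (x 0 ^ 2 + x 1 ^ 2 + x 2 ^ 2 + x 3 ^ 2) ^ 2 + (x 4) ^ 2 ≠ 0) :
    X1 (X1 phiR) x + X2 (X2 phiR) x + X3 (X3 phiR) x + X4 (X4 phiR) x = 0 := by
  rw [← sumOfSquares_heisenbergMatrix, phiR_eq_koranyiQuartic_rpow]
  exact phiR_harmonic_general heisenbergMatrix_transpose heisenbergMatrix_transpose_mul_self
    (koranyiQuartic_fin_five x ▸ h)
end

section
/- Let γ, γ′ : ℂ⁵ → ℂ be twice continuously differentiable and suppose V₀₁′γ′ = V₀₀′γ and V₁₁′γ′ = V₁₀′γ on ℂ⁵. Then V₀₁′(V₁₀′γ′) = V₁₁′(V₀₀′γ′), i.e. the 1-form Λ = V₀₀′γ′·θ^{01′} + V₁₀′γ′·θ^{11′} is d₁-closed. Dually, if V₀₀′γ′ = V₀₁′γ and V₁₀′γ′ = V₁₁′γ on ℂ⁵, then V₀₀′(V₁₁′γ′) = V₁₀′(V₀₁′γ′), i.e. the 1-form Λ̃ = V₀₁′γ′·θ^{00′} + V₁₁′γ′·θ^{10′} is d₀-closed. -/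
/-- Complex partial derivative in the `i`-th coordinate direction on `ℂ⁵`. -/
noncomputable def pd (i : Fin 5) (f : (Fin 5 → ℂ) → ℂ) (y : Fin 5 → ℂ) : ℂ :=
  fderiv ℂ f y (Pi.single i 1)

/-- Coordinates on `ℂ⁵` are `(y₀₀′, y₁₀′, y₀₁′, y₁₁′, t)`, with indices `0,1,2,3,4`. -/
noncomputable def V00 (f : (Fin 5 → ℂ) → ℂ) (y : Fin 5 → ℂ) : ℂ := pd 0 f y - y 3 * pd 4 f y
noncomputable def V01 (f : (Fin 5 → ℂ) → ℂ) (y : Fin 5 → ℂ) : ℂ := pd 2 f y + y 1 * pd 4 f y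
noncomputable def V10 (f : (Fin 5 → ℂ) → ℂ) (y : Fin 5 → ℂ) : ℂ := pd 1 f y - y 2 * pd 4 f y
noncomputable def V11 (f : (Fin 5 → ℂ) → ℂ) (y : Fin 5 → ℂ) : ℂ := pd 3 f y + y 0 * pd 4 f y
noncomputable def T5 (f : (Fin 5 → ℂ) → ℂ) (y : Fin 5 → ℂ) : ℂ := pd 4 f y

/-!
Differentiation along a vector field turns Lie brackets into commutators of second order. The
Heisenberg fields satisfy `[V₀₀′, V₁₀′] = [V₀₁′, V₁₁′] = 0` and `[V₀₀′, V₁₁′] = [V₁₀′, V₀₁′] = 2∂ₜ`,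
so that under the first pair of hypotheses
`V₁₁′V₀₀′γ′ + 2∂ₜγ′ = V₀₀′V₁₁′γ′ = V₀₀′V₁₀′γ = V₁₀′V₀₀′γ = V₁₀′V₀₁′γ′ = V₀₁′V₁₀′γ′ + 2∂ₜγ′`,
and dually with `0′` and `1′` exchanged.
-/

open VectorField Filter Topology

section VectorFields

variable (𝕜 : Type*) [NontriviallyNormedField 𝕜]
  {E : Type*} [NormedAddCommGroup E] [NormedSpace 𝕜 E]
  {F : Type*} [NormedAddCommGroup F] [NormedSpace 𝕜 F]

/-- The derivative `X f` of a function `f` along a vector field `X`, the field acting as a first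
order differential operator. -/
noncomputable def derivAlong (X : E → E) (f : E → F) (x : E) : F := fderiv 𝕜 f x (X x)

variable {𝕜}

theorem derivAlong_sub_derivAlong_comm {n : WithTop ℕ∞} {X Y : E → E} {f : E → F} {x : E}
    (hf : ContDiffAt 𝕜 n f x) (hn : minSmoothness 𝕜 2 ≤ n)
    (hX : DifferentiableAt 𝕜 X x) (hY : DifferentiableAt 𝕜 Y x) :
    derivAlong 𝕜 X (derivAlong 𝕜 Y f) x - derivAlong 𝕜 Y (derivAlong 𝕜 X f) x =
      derivAlong 𝕜 (lieBracket 𝕜 X Y) f x :=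
  (fderiv_apply_lieBracket hf hn hY hX).symm

theorem derivAlong_congr {X : E → E} {f g : E → F} {x : E} (h : f =ᶠ[𝓝 x] g) :
    derivAlong 𝕜 X f x = derivAlong 𝕜 X g x := by
  rw [derivAlong, h.fderiv_eq, derivAlong]

theorem derivAlong_derivAlong_eq_of_lieBracket_eq {n : WithTop ℕ∞} {X Y Z W : E → E}
    {f g : E → F} {x : E} (hf : ContDiffAt 𝕜 n f x) (hg : ContDiffAt 𝕜 n g x)
    (hn : minSmoothness 𝕜 2 ≤ n)
    (hX : DifferentiableAt 𝕜 X x) (hY : DifferentiableAt 𝕜 Y x)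
    (hZ : DifferentiableAt 𝕜 Z x) (hW : DifferentiableAt 𝕜 W x)
    (hXY : lieBracket 𝕜 X Y x = 0) (hXW : lieBracket 𝕜 X W x = lieBracket 𝕜 Y Z x)
    (hZX : derivAlong 𝕜 Z g =ᶠ[𝓝 x] derivAlong 𝕜 X f)
    (hWY : derivAlong 𝕜 W g =ᶠ[𝓝 x] derivAlong 𝕜 Y f) :
    derivAlong 𝕜 Z (derivAlong 𝕜 Y g) x = derivAlong 𝕜 W (derivAlong 𝕜 X g) x := by
  have hcomm : derivAlong 𝕜 X (derivAlong 𝕜 W g) x = derivAlong 𝕜 Y (derivAlong 𝕜 Z g) x := by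
    rw [derivAlong_congr hWY, derivAlong_congr hZX, ← sub_eq_zero,
      derivAlong_sub_derivAlong_comm hf hn hX hY, derivAlong, hXY, map_zero]
  have hbracket : derivAlong 𝕜 (lieBracket 𝕜 X W) g x = derivAlong 𝕜 (lieBracket 𝕜 Y Z) g x := by
    rw [derivAlong, hXW, derivAlong]
  rw [← derivAlong_sub_derivAlong_comm hg hn hX hW,
    ← derivAlong_sub_derivAlong_comm hg hn hY hZ, hcomm] at hbracket
  exact (sub_right_injective hbracket).symm

/-- The affine vector field `y ↦ a + ℓ(y) c`. The left-invariant fields of the Heisenberg group are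
of this form, with `c` the central direction. -/
def shearField (a : E) (ℓ : E →L[𝕜] 𝕜) (c : E) (y : E) : E := a + ℓ y • c

theorem hasFDerivAt_shearField (a : E) (ℓ : E →L[𝕜] 𝕜) (c y : E) :
    HasFDerivAt (shearField a ℓ c) (ℓ.smulRight c) y :=
  (ℓ.smulRight c).hasFDerivAt.const_add a

theorem lieBracket_shearField {ℓ m : E →L[𝕜] 𝕜} {c : E} (hℓ : ℓ c = 0) (hm : m c = 0)
    (a b y : E) :
    lieBracket 𝕜 (shearField a ℓ c) (shearField b m c) y = (m a - ℓ b) • c := by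
  rw [lieBracket, (hasFDerivAt_shearField a ℓ c y).fderiv, (hasFDerivAt_shearField b m c y).fderiv]
  simp [shearField, hℓ, hm, sub_smul]

end VectorFields

section Heisenberg

open ContinuousLinearMap (proj)

/-- The vector field `V₀₀′ = ∂/∂y₀₀′ − y₁₁′ ∂/∂t`, whose differential operator is `V00`. -/
noncomputable def vectorField00 : (Fin 5 → ℂ) → Fin 5 → ℂ :=
  shearField (𝕜 := ℂ) (Pi.single 0 1) (-proj 3) (Pi.single 4 1)

/-- The vector field `V₀₁′ = ∂/∂y₀₁′ + y₁₀′ ∂/∂t`, whose differential operator is `V01`. -/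
noncomputable def vectorField01 : (Fin 5 → ℂ) → Fin 5 → ℂ :=
  shearField (𝕜 := ℂ) (Pi.single 2 1) (proj 1) (Pi.single 4 1)

/-- The vector field `V₁₀′ = ∂/∂y₁₀′ − y₀₁′ ∂/∂t`, whose differential operator is `V10`. -/
noncomputable def vectorField10 : (Fin 5 → ℂ) → Fin 5 → ℂ :=
  shearField (𝕜 := ℂ) (Pi.single 1 1) (-proj 2) (Pi.single 4 1)

/-- The vector field `V₁₁′ = ∂/∂y₁₁′ + y₀₀′ ∂/∂t`, whose differential operator is `V11`. -/
noncomputable def vectorField11 : (Fin 5 → ℂ) → Fin 5 → ℂ :=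
  shearField (𝕜 := ℂ) (Pi.single 3 1) (proj 0) (Pi.single 4 1)

theorem V00_eq_derivAlong : V00 = derivAlong ℂ vectorField00 := by
  ext f y
  simp [V00, pd, derivAlong, vectorField00, shearField, sub_eq_add_neg]

theorem V01_eq_derivAlong : V01 = derivAlong ℂ vectorField01 := by
  ext f y
  simp [V01, pd, derivAlong, vectorField01, shearField]

theorem V10_eq_derivAlong : V10 = derivAlong ℂ vectorField10 := by
  ext f y
  simp [V10, pd, derivAlong, vectorField10, shearField, sub_eq_add_neg]

theorem V11_eq_derivAlong : V11 = derivAlong ℂ vectorField11 := by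
  ext f y
  simp [V11, pd, derivAlong, vectorField11, shearField]

theorem differentiable_vectorField00 : Differentiable ℂ vectorField00 :=
  fun y ↦ (hasFDerivAt_shearField _ _ _ y).differentiableAt

theorem differentiable_vectorField01 : Differentiable ℂ vectorField01 :=
  fun y ↦ (hasFDerivAt_shearField _ _ _ y).differentiableAt

theorem differentiable_vectorField10 : Differentiable ℂ vectorField10 :=
  fun y ↦ (hasFDerivAt_shearField _ _ _ y).differentiableAt

theorem differentiable_vectorField11 : Differentiable ℂ vectorField11 :=
  fun y ↦ (hasFDerivAt_shearField _ _ _ y).differentiableAt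

theorem lieBracket_vectorField00_vectorField10 (y : Fin 5 → ℂ) :
    lieBracket ℂ vectorField00 vectorField10 y = 0 := by
  rw [vectorField00, vectorField10, lieBracket_shearField (by simp) (by simp)]
  simp

theorem lieBracket_vectorField01_vectorField11 (y : Fin 5 → ℂ) :
    lieBracket ℂ vectorField01 vectorField11 y = 0 := by
  rw [vectorField01, vectorField11, lieBracket_shearField (by simp) (by simp)]
  simp

theorem lieBracket_vectorField00_vectorField11 (y : Fin 5 → ℂ) :
    lieBracket ℂ vectorField00 vectorField11 y = (2 : ℂ) • Pi.single 4 1 := by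
  rw [vectorField00, vectorField11, lieBracket_shearField (by simp) (by simp)]
  norm_num

theorem lieBracket_vectorField10_vectorField01 (y : Fin 5 → ℂ) :
    lieBracket ℂ vectorField10 vectorField01 y = (2 : ℂ) • Pi.single 4 1 := by
  rw [vectorField10, vectorField01, lieBracket_shearField (by simp) (by simp)]
  norm_num

theorem lambda_closedness_general {γ γ' : (Fin 5 → ℂ) → ℂ} {y : Fin 5 → ℂ}
    (hγ : ContDiffAt ℂ 2 γ y) (hγ' : ContDiffAt ℂ 2 γ' y) :
    (V01 γ' =ᶠ[𝓝 y] V00 γ → V11 γ' =ᶠ[𝓝 y] V10 γ → V01 (V10 γ') y = V11 (V00 γ') y) ∧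
    (V00 γ' =ᶠ[𝓝 y] V01 γ → V10 γ' =ᶠ[𝓝 y] V11 γ → V00 (V11 γ') y = V10 (V01 γ') y) := by
  have h2 : minSmoothness ℂ 2 ≤ 2 := minSmoothness_of_isRCLikeNormedField.le
  have h00 := differentiable_vectorField00 y
  have h01 := differentiable_vectorField01 y
  have h10 := differentiable_vectorField10 y
  have h11 := differentiable_vectorField11 y
  have hbracket : lieBracket ℂ vectorField00 vectorField11 y =
      lieBracket ℂ vectorField10 vectorField01 y := by
    rw [lieBracket_vectorField00_vectorField11, lieBracket_vectorField10_vectorField01]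
  have hbracket' : lieBracket ℂ vectorField01 vectorField10 y =
      lieBracket ℂ vectorField11 vectorField00 y := by
    rw [lieBracket_swap, ← hbracket, ← lieBracket_swap]
  simp only [V00_eq_derivAlong, V01_eq_derivAlong, V10_eq_derivAlong, V11_eq_derivAlong]
  exact ⟨derivAlong_derivAlong_eq_of_lieBracket_eq hγ hγ' h2 h00 h10 h01 h11
      (lieBracket_vectorField00_vectorField10 y) hbracket,
    derivAlong_derivAlong_eq_of_lieBracket_eq hγ hγ' h2 h01 h11 h00 h10
      (lieBracket_vectorField01_vectorField11 y) hbracket'⟩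

end Heisenberg

/-- If `V₀₁′γ′ = V₀₀′γ` and `V₁₁′γ′ = V₁₀′γ` then the 1-form
`Λ = V₀₀′γ′·θ^{01′} + V₁₀′γ′·θ^{11′}` is `d₁`-closed, i.e.
`V₀₁′(V₁₀′γ′) = V₁₁′(V₀₀′γ′)`; dually for `d₀`. -/
theorem lambda_closedness (γ γ' : (Fin 5 → ℂ) → ℂ)
    (hγ : ContDiff ℂ 2 γ) (hγ' : ContDiff ℂ 2 γ') :
    ((∀ y, V01 γ' y = V00 γ y) → (∀ y, V11 γ' y = V10 γ y) →
      ∀ y, V01 (V10 γ') y = V11 (V00 γ') y) ∧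
    ((∀ y, V00 γ' y = V01 γ y) → (∀ y, V10 γ' y = V11 γ y) →
      ∀ y, V00 (V11 γ') y = V10 (V01 γ') y) :=
  ⟨fun h₀ h₁ _ ↦ (lambda_closedness_general hγ.contDiffAt hγ'.contDiffAt).1
      (.of_forall h₀) (.of_forall h₁),
    fun h₀ h₁ _ ↦ (lambda_closedness_general hγ.contDiffAt hγ'.contDiffAt).2
      (.of_forall h₀) (.of_forall h₁)⟩
end

section
/- Let γ₀ : ℂ⁵ → ℂ be holomorphic (entire) and satisfy the sub-Laplacian equation Δ_bγ₀ := V₀₀′(V₁₁′γ₀) − V₁₀′(V₀₁′γ₀) = 0. Then there exists a two-sided sequence (γ_i)_{i∈ℤ} of holomorphic functions ℂ⁵ → ℂ, with the given γ₀ in position 0, satisfying the recursion V₀₁′γ_i = V₀₀′γ_{i+1} and V₁₁′γ_i = V₁₀′γ_{i+1} for every i ∈ ℤ. (Equivalently, V_Aγ ≡ 0 for A = 0,1 holds for the formal Laurent series γ = Σ_i γ_{-i}ζ^i.) -/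
/-!
The four fields are left-invariant on a step-two nilpotent group. `V₀₀′` and `V₁₀′` commute and
generate the right translations by an abelian subgroup, so by the Poincaré lemma along its orbits
`V₀₀′g = a`, `V₁₀′g = b` has an entire solution as soon as `V₁₀′a = V₀₀′b`. For `a = V₀₁′γ_i` and
`b = V₁₁′γ_i` this compatibility condition is `Δ_bγ_i = 0`. Since `[V₀₀′, V₁₁′] = [V₁₀′, V₀₁′]`,
also `Δ_b = V₁₁′V₀₀′ − V₀₁′V₁₀′`, so `V₀₁′` and `V₁₁′` commuting gives `Δ_bg = 0` and the
construction can be iterated with `γ_{i+1} = g`. Exchanging the two pairs of fields produces the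
negative indices.
-/

open Filter Metric Set Topology

section EntireFunctions

variable {E G : Type*} [NormedAddCommGroup E] [NormedSpace ℂ E]
  [NormedAddCommGroup G] [NormedSpace ℂ G]

theorem continuous_circleMap_inv_sq_smul {Y : Type*} [TopologicalSpace Y] {F : Y → ℂ → G}
    (hF : Continuous F.uncurry) : Continuous fun p : Y × ℝ =>
      deriv (circleMap 0 1) p.2 • (circleMap 0 1 p.2 ^ 2)⁻¹ • F p.1 (circleMap 0 1 p.2) := by
  have hcircle : Continuous fun p : Y × ℝ => circleMap 0 1 p.2 :=
    (continuous_circleMap 0 1).comp continuous_snd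
  have hinv : Continuous fun p : Y × ℝ => (circleMap 0 1 p.2 ^ 2)⁻¹ :=
    (hcircle.pow 2).inv₀ fun p => by simp
  simp only [deriv_circleMap]
  exact (by fun_prop : Continuous _).smul (hinv.smul (hF.comp (continuous_fst.prodMk hcircle)))

variable [CompleteSpace G]

theorem fderiv_apply_eq_circleIntegral {f : E → G} (hf : Differentiable ℂ f) (x v : E) :
    fderiv ℂ f x v =
      (2 * Real.pi * Complex.I : ℂ)⁻¹ • ∮ z in C(0, 1), (z ^ 2)⁻¹ • f (x + z • v) := by
  have hline : Differentiable ℂ fun z : ℂ => f (x + z • v) := by fun_prop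
  have hcauchy := Complex.two_pi_I_inv_smul_circleIntegral_sub_sq_inv_smul_of_differentiable
    (c := 0) isOpen_univ (subset_univ _) hline.differentiableOn (mem_ball_self one_pos)
  simpa [← (hf x).lineDeriv_eq_fderiv, lineDeriv] using hcauchy.symm

variable [FiniteDimensional ℂ E]

theorem continuous_fderiv_of_continuous_uncurry {X : Type*} [TopologicalSpace X]
    {F : E → X → G} (hF : Continuous F.uncurry) (hd : ∀ s, Differentiable ℂ fun x => F x s) :
    Continuous fun p : E × X => fderiv ℂ (fun x => F x p.2) p.1 := by
  refine continuous_clm_apply.2 fun v => ?_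
  simp only [fderiv_apply_eq_circleIntegral (hd _), circleIntegral]
  refine (intervalIntegral.continuous_parametric_intervalIntegral_of_continuous'
    (continuous_circleMap_inv_sq_smul (F := fun (p : E × X) z => F (p.1 + z • v) p.2) ?_)
      _ _).const_smul _
  exact hF.comp (by fun_prop : Continuous fun p : (E × X) × ℂ => (p.1.1 + p.2 • v, p.1.2))

theorem differentiable_intervalIntegral {F : E → ℝ → G} (hF : Continuous F.uncurry)
    (hd : ∀ s, Differentiable ℂ fun x => F x s) (a b : ℝ) :
    Differentiable ℂ fun x => ∫ s in a..b, F x s := by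
  intro x₀
  have hF' := continuous_fderiv_of_continuous_uncurry hF hd
  have hF'₀ : Continuous fun s => fderiv ℂ (fun x => F x s) x₀ :=
    hF'.comp (Continuous.prodMk_right x₀)
  have hslice (x : E) : Continuous (F x) := hF.comp (Continuous.prodMk_right x)
  have hdom : Continuous fun s => ‖fderiv ℂ (fun x => F x s) x₀‖ + 1 :=
    hF'₀.norm.add continuous_const
  have hbound : ∀ᶠ x in 𝓝 x₀, ∀ s ∈ uIcc a b,
      ‖fderiv ℂ (fun x => F x s) x‖ ≤ ‖fderiv ℂ (fun x => F x s) x₀‖ + 1 := by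
    refine isCompact_uIcc.eventually_forall_of_forall_eventually fun s _ => ?_
    have hlt : ‖fderiv ℂ (fun x => F x s) x₀‖ < ‖fderiv ℂ (fun x => F x s) x₀‖ + 1 := lt_add_one _
    exact ((isOpen_lt hF'.norm (hdom.comp continuous_snd)).eventually_mem
      (x := (x₀, s)) hlt).mono fun _ hp => le_of_lt (α := ℝ) hp
  exact (intervalIntegral.hasFDerivAt_integral_of_dominated_of_fderiv_le hbound
    (.of_forall fun x => (hslice x).aestronglyMeasurable) ((hslice x₀).intervalIntegrable a b)
    hF'₀.aestronglyMeasurable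
    (.of_forall fun s hs x hx => hx s (uIoc_subset_uIcc hs))
    (hdom.intervalIntegrable a b)
    (.of_forall fun s _ x _ => (hd s x).hasFDerivAt)).differentiableAt

theorem differentiable_fderiv_apply {f : E → G} (hf : Differentiable ℂ f) (v : E) :
    Differentiable ℂ fun x => fderiv ℂ f x v := by
  simp only [fderiv_apply_eq_circleIntegral hf, circleIntegral]
  refine (differentiable_intervalIntegral (continuous_circleMap_inv_sq_smul
    (F := fun x z => f (x + z • v)) ?_) (fun s => ?_) _ _).fun_const_smul _
  · exact hf.continuous.comp (by fun_prop : Continuous fun p : E × ℂ => p.1 + p.2 • v)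
  · fun_prop

theorem contDiff_of_differentiable_complex {f : E → G} (hf : Differentiable ℂ f) (n : ℕ) :
    ContDiff ℂ n f := by
  induction n generalizing f with
  | zero => exact contDiff_zero.2 hf.continuous
  | succ n ih =>
    exact contDiff_succ_iff_fderiv_apply.2
      ⟨hf, by simp, fun v => ih (differentiable_fderiv_apply hf v)⟩

theorem differentiable_fderiv {f : E → G} (hf : Differentiable ℂ f) :
    Differentiable ℂ (fderiv ℂ f) :=
  ((contDiff_of_differentiable_complex hf 2).fderiv_right (m := 1) (by norm_num)).differentiable
    one_ne_zero

-- For each `m` a primitive exists on `K`; it is, up to its value at `0`, the integral of `η` along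
-- rays, and this integral is holomorphic in `(k, m)`.
theorem exists_differentiable_hasFDerivAt_fst {K M : Type*} [NormedAddCommGroup K]
    [NormedSpace ℂ K] [FiniteDimensional ℂ K] [NormedAddCommGroup M] [NormedSpace ℂ M]
    [FiniteDimensional ℂ M] {η : K × M → K →L[ℂ] G} (hη : Differentiable ℂ η)
    (hsymm : ∀ m k u v, fderiv ℂ (fun k => η (k, m)) k u v = fderiv ℂ (fun k => η (k, m)) k v u) :
    ∃ h : K × M → G, Differentiable ℂ h ∧
      ∀ k m, HasFDerivAt (fun k => h (k, m)) (η (k, m)) k := by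
  have hslice (m : M) : Differentiable ℂ fun k => η (k, m) := by fun_prop
  have hprim (m : M) : ∃ h : K → G, ∀ k, HasFDerivAt h (η (k, m)) k := by
    obtain ⟨h, hh⟩ :=
      convex_univ.exists_forall_hasFDerivWithinAt_of_hasFDerivWithinAt_symmetric (𝕜 := ℂ)
        (fun k _ => ((hslice m k).hasFDerivAt.restrictScalars ℝ).hasFDerivWithinAt)
        (fun k _ u _ v _ => hsymm m k u v)
    exact ⟨h, fun k => (hh k (mem_univ k)).hasFDerivAt univ_mem⟩
  choose h hh using hprim
  let F : K × M → ℝ → G := fun p s => η ((s : ℂ) • p.1, p.2) p.1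
  have hF : Continuous F.uncurry := by
    have := hη.continuous
    simp only [F, Function.uncurry_def]
    fun_prop
  have hFd (s : ℝ) : Differentiable ℂ fun p => F p s := by
    simp only [F]
    fun_prop
  have hradial (k : K) (m : M) : ∫ s in (0 : ℝ)..1, F (k, m) s = h m k - h m 0 := by
    have hray (s : ℝ) : HasDerivAt (fun s : ℝ => h m ((s : ℂ) • k)) (F (k, m) s) s := by
      have hline : HasDerivAt (fun s : ℝ => (s : ℂ) • k) k s := by
        simpa using Complex.ofRealCLM.hasDerivAt.smul_const k
      exact ((hh m _).restrictScalars ℝ).comp_hasDerivAt s hline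
    simpa using intervalIntegral.integral_eq_sub_of_hasDerivAt (fun s _ => hray s)
      ((hF.comp (Continuous.prodMk_right (k, m))).intervalIntegrable 0 1)
  refine ⟨fun p => ∫ s in (0 : ℝ)..1, F p s, differentiable_intervalIntegral hF hFd 0 1,
    fun k m => ?_⟩
  simpa only [hradial] using (hh m k).sub_const _

end EntireFunctions

section StepTwoGroup

variable {E G : Type*} [NormedAddCommGroup E] [NormedSpace ℂ E]
  [NormedAddCommGroup G] [NormedSpace ℂ G] {B : E →L[ℂ] E →L[ℂ] E}

/-- The derivative of `f` along the left-invariant vector field with value `v` at the origin, for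
the step-two nilpotent group law `y * w = y + w + B y w` on `E`. -/
noncomputable def leftInvDeriv (B : E →L[ℂ] E →L[ℂ] E) (v : E) (f : E → G) (y : E) : G :=
  fderiv ℂ f y (v + B y v)

theorem differentiable_leftInvDeriv [FiniteDimensional ℂ E] [CompleteSpace G] {f : E → G}
    (hf : Differentiable ℂ f) (v : E) : Differentiable ℂ (leftInvDeriv B v f) := by
  have hf' := differentiable_fderiv hf
  unfold leftInvDeriv
  fun_prop

theorem leftInvDeriv_smul_add_smul (c d : ℂ) (v w : E) (f : E → G) (y : E) :
    leftInvDeriv B (c • v + d • w) f y = c • leftInvDeriv B v f y + d • leftInvDeriv B w f y := by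
  simp only [leftInvDeriv, map_add, map_smul, smul_add]
  exact add_add_add_comm _ _ _ _

theorem leftInvDeriv_clm_apply {K : Type*} [NormedAddCommGroup K] [NormedSpace ℂ K]
    {ω : E → K →L[ℂ] G} (hω : Differentiable ℂ ω) (v y : E) (u : K) :
    leftInvDeriv B v ω y u = leftInvDeriv B v (fun y => ω y u) y := by
  simp [leftInvDeriv, fderiv_clm_apply (hω y) (differentiableAt_const u)]

theorem leftInvDeriv_leftInvDeriv_sub [FiniteDimensional ℂ E] [CompleteSpace G]
    (hB : ∀ x y z, B (B x y) z = 0) {f : E → G} (hf : Differentiable ℂ f) (v w y : E) :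
    leftInvDeriv B v (leftInvDeriv B w f) y - leftInvDeriv B w (leftInvDeriv B v f) y =
      fderiv ℂ f y (B v w - B w v) := by
  have hsymm : IsSymmSndFDerivAt ℂ f y :=
    (contDiff_of_differentiable_complex hf 2).contDiffAt.isSymmSndFDerivAt (by simp)
  have hexpand (v w : E) : leftInvDeriv B v (leftInvDeriv B w f) y =
      fderiv ℂ (fderiv ℂ f) y (v + B y v) (w + B y w) + fderiv ℂ f y (B v w) := by
    have hfield : HasFDerivAt (fun y => w + B y w) (B.flip w) y :=
      (B.flip w).hasFDerivAt.const_add w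
    have hw : HasFDerivAt (leftInvDeriv B w f) _ y :=
      (differentiable_fderiv hf y).hasFDerivAt.clm_apply hfield
    have hBv : B.flip w (v + B y v) = B v w := by simp [hB]
    rw [leftInvDeriv, hw.fderiv, add_apply, ContinuousLinearMap.comp_apply, hBv, add_comm,
      ContinuousLinearMap.flip_apply]
  rw [hexpand, hexpand, hsymm.eq, map_sub]
  abel

/-- Right translation of `y` by `w` for the step-two group law attached to `B`. -/
noncomputable def rightTranslate (B : E →L[ℂ] E →L[ℂ] E) (w y : E) : E := y + w + B y w

theorem rightTranslate_rightTranslate (hB : ∀ x y z, B (B x y) z = 0) {v w : E}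
    (hvw : B v w = 0) (y : E) :
    rightTranslate B w (rightTranslate B v y) = rightTranslate B (v + w) y := by
  simp only [rightTranslate, map_add, add_apply, hB, hvw]
  abel

theorem rightTranslate_zero (y : E) : rightTranslate B 0 y = y := by
  simp [rightTranslate]

variable {K : Type*} [NormedAddCommGroup K] [NormedSpace ℂ K] {ι : K →L[ℂ] E}

theorem fderiv_comp_rightTranslate (hB : ∀ x y z, B (B x y) z = 0)
    (hι : ∀ k l, B (ι k) (ι l) = 0) {f : E → G} (hf : Differentiable ℂ f) (y : E) (k u : K) :
    fderiv ℂ (fun k => f (rightTranslate B (ι k) y)) k u =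
      leftInvDeriv B (ι u) f (rightTranslate B (ι k) y) := by
  have horbit : HasFDerivAt (fun k => rightTranslate B (ι k) y) (ι + B y ∘L ι) k :=
    (ι.hasFDerivAt.const_add y).add (B y ∘L ι).hasFDerivAt
  have hcomp := ((hf (rightTranslate B (ι k) y)).hasFDerivAt.comp k horbit).fderiv
  refine (DFunLike.congr_fun hcomp u).trans ?_
  simp [leftInvDeriv, rightTranslate, hB, hι]

variable [FiniteDimensional ℂ E] [FiniteDimensional ℂ K] [CompleteSpace G]

-- Integrate `ω` over the orbits of right translation by the commutative subgroup `ι K`, starting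
-- from the transversal `p = 0`.
theorem exists_leftInvDeriv_eq (hB : ∀ x y z, B (B x y) z = 0)
    (hι : ∀ k l, B (ι k) (ι l) = 0) {p : E →L[ℂ] K} (hpι : ∀ k, p (ι k) = k)
    (hpB : ∀ x y, p (B x y) = 0) {ω : E → K →L[ℂ] G} (hω : Differentiable ℂ ω)
    (hsymm : ∀ y u v, leftInvDeriv B (ι u) ω y v = leftInvDeriv B (ι v) ω y u) :
    ∃ g : E → G, Differentiable ℂ g ∧ ∀ y u, leftInvDeriv B (ι u) g y = ω y u := by
  obtain ⟨h, hh, hhω⟩ := exists_differentiable_hasFDerivAt_fst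
    (η := fun q : K × E => ω (rightTranslate B (ι q.1) q.2))
    (by unfold rightTranslate; fun_prop)
    fun y k u v => by simp only [fderiv_comp_rightTranslate hB hι hω, hsymm _ u v]
  let g : E → G := fun y => h (p y, rightTranslate B (ι (-p y)) y)
  have hg : Differentiable ℂ g := by
    simp only [g, rightTranslate]
    fun_prop
  have hg_orbit (y : E) (k : K) :
      g (rightTranslate B (ι k) y) = h (k + p y, rightTranslate B (ι (-p y)) y) := by
    have hp : p (rightTranslate B (ι k) y) = k + p y := by
      simp [rightTranslate, hpι, hpB, add_comm]
    simp only [g, hp]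
    rw [rightTranslate_rightTranslate hB (hι _ _), ← map_add, neg_add, add_neg_cancel_left]
  refine ⟨g, hg, fun y u => ?_⟩
  have hbase : rightTranslate B (ι (p y)) (rightTranslate B (ι (-p y)) y) = y := by
    rw [rightTranslate_rightTranslate hB (hι _ _), ← map_add, neg_add_cancel, map_zero,
      rightTranslate_zero]
  have hderiv : HasFDerivAt (fun k => g (rightTranslate B (ι k) y)) (ω y) 0 := by
    have := (hasFDerivAt_comp_add_right (p y)).2 (hhω (0 + p y) (rightTranslate B (ι (-p y)) y))
    simpa only [hg_orbit, zero_add, hbase] using this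
  have := fderiv_comp_rightTranslate hB hι hg y 0 u
  rwa [hderiv.fderiv, map_zero, rightTranslate_zero, eq_comm] at this

end StepTwoGroup

section Heisenberg

/-- The bilinear map for which the fields `V₀₀′, V₁₀′, V₀₁′, V₁₁′` are the left-invariant fields
of the group law `y * w = y + w + heisenbergForm y w` on `ℂ⁵`. -/
noncomputable def heisenbergForm : (Fin 5 → ℂ) →L[ℂ] (Fin 5 → ℂ) →L[ℂ] (Fin 5 → ℂ) :=
  let x (i : Fin 5) : (Fin 5 → ℂ) →L[ℂ] ℂ := .proj i
  let t (i : Fin 5) : (Fin 5 → ℂ) →L[ℂ] (Fin 5 → ℂ) := (x i).smulRight (Pi.single 4 1)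
  (x 0).smulRight (t 3) + (x 1).smulRight (t 2) - (x 2).smulRight (t 1) - (x 3).smulRight (t 0)

theorem heisenbergForm_apply (y w : Fin 5 → ℂ) : heisenbergForm y w =
    (y 0 * w 3 + y 1 * w 2 - y 2 * w 1 - y 3 * w 0) • Pi.single 4 1 := by
  simp [heisenbergForm, smul_smul, add_smul, sub_smul]

theorem heisenbergForm_heisenbergForm (x y z : Fin 5 → ℂ) :
    heisenbergForm (heisenbergForm x y) z = 0 := by
  simp [heisenbergForm_apply]

theorem heisenbergForm_self (y : Fin 5 → ℂ) : heisenbergForm y y = 0 := by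
  rw [heisenbergForm_apply, smul_eq_zero]
  left
  ring

theorem heisenbergForm_swap (y w : Fin 5 → ℂ) : heisenbergForm y w = -heisenbergForm w y := by
  simp only [heisenbergForm_apply, ← neg_smul]
  congr 1
  ring

theorem V00_eq_leftInvDeriv : V00 = leftInvDeriv heisenbergForm (Pi.single 0 1) := by
  ext f y
  simp [V00, pd, leftInvDeriv, heisenbergForm_apply, sub_eq_add_neg]

theorem V10_eq_leftInvDeriv : V10 = leftInvDeriv heisenbergForm (Pi.single 1 1) := by
  ext f y
  simp [V10, pd, leftInvDeriv, heisenbergForm_apply, sub_eq_add_neg]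

theorem V01_eq_leftInvDeriv : V01 = leftInvDeriv heisenbergForm (Pi.single 2 1) := by
  ext f y
  simp [V01, pd, leftInvDeriv, heisenbergForm_apply]

theorem V11_eq_leftInvDeriv : V11 = leftInvDeriv heisenbergForm (Pi.single 3 1) := by
  ext f y
  simp [V11, pd, leftInvDeriv, heisenbergForm_apply]

theorem exists_leftInvDeriv_heisenbergForm_eq {i j : Fin 5} (hij : i ≠ j) (hi : i ≠ 4) (hj : j ≠ 4)
    (hform : heisenbergForm (Pi.single i 1) (Pi.single j 1) = 0) {a b : (Fin 5 → ℂ) → ℂ}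
    (ha : Differentiable ℂ a) (hb : Differentiable ℂ b)
    (hab : leftInvDeriv heisenbergForm (Pi.single j 1) a =
      leftInvDeriv heisenbergForm (Pi.single i 1) b) :
    ∃ g, Differentiable ℂ g ∧ leftInvDeriv heisenbergForm (Pi.single i 1) g = a ∧
      leftInvDeriv heisenbergForm (Pi.single j 1) g = b := by
  let e (i : Fin 5) : Fin 5 → ℂ := Pi.single i 1
  let ι : ℂ × ℂ →L[ℂ] (Fin 5 → ℂ) := .coprod (.toSpanSingleton ℂ (e i)) (.toSpanSingleton ℂ (e j))
  let p : (Fin 5 → ℂ) →L[ℂ] ℂ × ℂ := .prod (.proj i) (.proj j)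
  let ω (y : Fin 5 → ℂ) : ℂ × ℂ →L[ℂ] ℂ := a y • .fst ℂ ℂ ℂ + b y • .snd ℂ ℂ ℂ
  have hι_apply (k : ℂ × ℂ) : ι k = k.1 • e i + k.2 • e j := rfl
  have hι (k l : ℂ × ℂ) : heisenbergForm (ι k) (ι l) = 0 := by
    have hij' : heisenbergForm (e i) (e j) = 0 := hform
    have hji : heisenbergForm (e j) (e i) = 0 := by rw [heisenbergForm_swap, hij', neg_zero]
    simp [hι_apply, heisenbergForm_self, hij', hji]
  have hpι (k : ℂ × ℂ) : p (ι k) = k := by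
    ext <;> simp [hι_apply, p, e, hij, hij.symm]
  have hpB (x y : Fin 5 → ℂ) : p (heisenbergForm x y) = 0 := by
    simp [p, heisenbergForm_apply, hi, hj]
  have hω : Differentiable ℂ ω := by fun_prop
  have hω_deriv (w y : Fin 5 → ℂ) (v : ℂ × ℂ) : leftInvDeriv heisenbergForm w ω y v =
      leftInvDeriv heisenbergForm w a y * v.1 + leftInvDeriv heisenbergForm w b y * v.2 := by
    have hωv : fderiv ℂ (fun y => ω y v) y = v.1 • fderiv ℂ a y + v.2 • fderiv ℂ b y :=
      (((ha y).hasFDerivAt.mul_const v.1).add ((hb y).hasFDerivAt.mul_const v.2)).fderiv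
    rw [leftInvDeriv_clm_apply hω]
    simp [leftInvDeriv, hωv, mul_comm]
  obtain ⟨g, hg, hgω⟩ := exists_leftInvDeriv_eq heisenbergForm_heisenbergForm hι hpι hpB hω
    fun y u v => by
      have hab' : leftInvDeriv heisenbergForm (e j) a y = leftInvDeriv heisenbergForm (e i) b y :=
        congrFun hab y
      rw [hω_deriv, hω_deriv]
      simp only [hι_apply, leftInvDeriv_smul_add_smul, hab', smul_eq_mul]
      ring
  refine ⟨g, hg, funext fun y => ?_, funext fun y => ?_⟩
  · simpa [hι_apply, ω] using hgω y (1, 0)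
  · simpa [hι_apply, ω] using hgω y (0, 1)

theorem V00_V10_comm {f : (Fin 5 → ℂ) → ℂ} (hf : Differentiable ℂ f) :
    V00 (V10 f) = V10 (V00 f) := by
  ext y
  rw [← sub_eq_zero, V00_eq_leftInvDeriv, V10_eq_leftInvDeriv,
    leftInvDeriv_leftInvDeriv_sub heisenbergForm_heisenbergForm hf]
  simp [heisenbergForm_apply]

theorem V01_V11_comm {f : (Fin 5 → ℂ) → ℂ} (hf : Differentiable ℂ f) :
    V01 (V11 f) = V11 (V01 f) := by
  ext y
  rw [← sub_eq_zero, V01_eq_leftInvDeriv, V11_eq_leftInvDeriv,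
    leftInvDeriv_leftInvDeriv_sub heisenbergForm_heisenbergForm hf]
  simp [heisenbergForm_apply]

-- Both `[V₀₀′, V₁₁′]` and `[V₁₀′, V₀₁′]` are `2 ∂/∂t`.
theorem V00_V11_sub_V10_V01_eq {f : (Fin 5 → ℂ) → ℂ} (hf : Differentiable ℂ f) :
    V00 (V11 f) - V10 (V01 f) = V11 (V00 f) - V01 (V10 f) := by
  rw [sub_eq_sub_iff_sub_eq_sub]
  ext y
  simp only [Pi.sub_apply, V00_eq_leftInvDeriv, V01_eq_leftInvDeriv, V10_eq_leftInvDeriv,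
    V11_eq_leftInvDeriv, leftInvDeriv_leftInvDeriv_sub heisenbergForm_heisenbergForm hf]
  simp [heisenbergForm_apply]

theorem exists_V00_eq_V10_eq {a b : (Fin 5 → ℂ) → ℂ} (ha : Differentiable ℂ a)
    (hb : Differentiable ℂ b) (hab : V10 a = V00 b) :
    ∃ g, Differentiable ℂ g ∧ V00 g = a ∧ V10 g = b := by
  rw [V00_eq_leftInvDeriv, V10_eq_leftInvDeriv] at *
  exact exists_leftInvDeriv_heisenbergForm_eq (by decide) (by decide) (by decide)
    (by simp [heisenbergForm_apply]) ha hb hab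

theorem exists_V01_eq_V11_eq {a b : (Fin 5 → ℂ) → ℂ} (ha : Differentiable ℂ a)
    (hb : Differentiable ℂ b) (hab : V11 a = V01 b) :
    ∃ g, Differentiable ℂ g ∧ V01 g = a ∧ V11 g = b := by
  rw [V01_eq_leftInvDeriv, V11_eq_leftInvDeriv] at *
  exact exists_leftInvDeriv_heisenbergForm_eq (by decide) (by decide) (by decide)
    (by simp [heisenbergForm_apply]) ha hb hab

end Heisenberg

section LaurentRecursion

/-- Entire functions on `ℂ⁵` annihilated by the sub-Laplacian: the functions that can occur as a
coefficient `γ_i`. -/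
def IsSubLaplaceEntire (f : (Fin 5 → ℂ) → ℂ) : Prop :=
  Differentiable ℂ f ∧ V00 (V11 f) - V10 (V01 f) = 0

theorem IsSubLaplaceEntire.exists_next {f : (Fin 5 → ℂ) → ℂ} (hf : IsSubLaplaceEntire f) :
    ∃ g, IsSubLaplaceEntire g ∧ V01 f = V00 g ∧ V11 f = V10 g := by
  obtain ⟨hd, hlap⟩ := hf
  have ha : Differentiable ℂ (V01 f) := V01_eq_leftInvDeriv ▸ differentiable_leftInvDeriv hd _
  have hb : Differentiable ℂ (V11 f) := V11_eq_leftInvDeriv ▸ differentiable_leftInvDeriv hd _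
  obtain ⟨g, hg, hga, hgb⟩ := exists_V00_eq_V10_eq ha hb (sub_eq_zero.1 hlap).symm
  refine ⟨g, ⟨hg, ?_⟩, hga.symm, hgb.symm⟩
  rw [V00_V11_sub_V10_V01_eq hg, hga, hgb, V01_V11_comm hd, sub_self]

theorem IsSubLaplaceEntire.exists_prev {f : (Fin 5 → ℂ) → ℂ} (hf : IsSubLaplaceEntire f) :
    ∃ g, IsSubLaplaceEntire g ∧ V01 g = V00 f ∧ V11 g = V10 f := by
  obtain ⟨hd, hlap⟩ := hf
  have ha : Differentiable ℂ (V00 f) := V00_eq_leftInvDeriv ▸ differentiable_leftInvDeriv hd _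
  have hb : Differentiable ℂ (V10 f) := V10_eq_leftInvDeriv ▸ differentiable_leftInvDeriv hd _
  obtain ⟨g, hg, hga, hgb⟩ := exists_V01_eq_V11_eq ha hb
    (sub_eq_zero.1 (V00_V11_sub_V10_V01_eq hd ▸ hlap))
  refine ⟨g, ⟨hg, ?_⟩, hga, hgb⟩
  rw [hga, hgb, V00_V10_comm hd, sub_self]

theorem exists_int_chain {α : Type*} {r : α → α → Prop} (hnext : ∀ a, ∃ b, r a b)
    (hprev : ∀ b, ∃ a, r a b) (a₀ : α) : ∃ u : ℤ → α, u 0 = a₀ ∧ ∀ i, r (u i) (u (i + 1)) := by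
  choose next hnext using hnext
  choose prev hprev using hprev
  let u : ℤ → α := fun i => match i with
    | .ofNat n => next^[n] a₀
    | .negSucc n => prev^[n + 1] a₀
  refine ⟨u, rfl, fun i => ?_⟩
  match i with
  | .ofNat n =>
    change r (next^[n] a₀) (next^[n + 1] a₀)
    rw [Function.iterate_succ_apply']
    exact hnext _
  | .negSucc 0 => exact hprev a₀
  | .negSucc (n + 1) =>
    change r (prev^[n + 1 + 1] a₀) (prev^[n + 1] a₀)
    rw [Function.iterate_succ_apply' prev (n + 1)]
    exact hprev _

end LaurentRecursion

/-- If `γ₀` is entire and satisfies the sub-Laplacian equation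
`Δ_bγ₀ = V₀₀′(V₁₁′γ₀) − V₁₀′(V₀₁′γ₀) = 0`, then there is a two-sided sequence
`(γ_i)_{i ∈ ℤ}` of entire functions with `γ_0 = γ₀` satisfying the recursion
`V₀₁′γ_i = V₀₀′γ_{i+1}` and `V₁₁′γ_i = V₁₀′γ_{i+1}` for all `i ∈ ℤ`. -/
theorem laurent_recursion_solvable (γ₀ : (Fin 5 → ℂ) → ℂ)
    (hγ₀ : Differentiable ℂ γ₀)
    (hlap : ∀ y, V00 (V11 γ₀) y - V10 (V01 γ₀) y = 0) :
    ∃ γ : ℤ → (Fin 5 → ℂ) → ℂ,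
      γ 0 = γ₀ ∧
      (∀ i : ℤ, Differentiable ℂ (γ i)) ∧
      (∀ i : ℤ, ∀ y, V01 (γ i) y = V00 (γ (i + 1)) y) ∧
      (∀ i : ℤ, ∀ y, V11 (γ i) y = V10 (γ (i + 1)) y) := by
  obtain ⟨u, hu0, hu⟩ := exists_int_chain
    (r := fun f g : {f // IsSubLaplaceEntire f} => V01 f.1 = V00 g.1 ∧ V11 f.1 = V10 g.1)
    (fun f => let ⟨g, hg, h⟩ := f.2.exists_next; ⟨⟨g, hg⟩, h⟩)
    (fun f => let ⟨g, hg, h⟩ := f.2.exists_prev; ⟨⟨g, hg⟩, h⟩) ⟨γ₀, hγ₀, funext hlap⟩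
  exact ⟨fun i => (u i).1, congrArg Subtype.val hu0, fun i => (u i).2.1,
    fun i => congrFun (hu i).1, fun i => congrFun (hu i).2⟩
end
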